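/- There exist constants c > 0 and ρ > 0 such that for every ε > 0 there is a natural number M₀ with the following property: for all M ≥ M₀ and all natural numbers H with 1 ≤ H ≤ ρ·M, letting B = {δ : Matrix (Fin M) (Fin M) (ZMod 2) | δ·δ = 0 ∧ M − 2·rank(δ) = H}, the number of pairs (δ₁, δ₂) ∈ B × B for which there exists an M×M matrix ψ over ZMod 2 with 0 < wt(ψ) < c·M² satisfying either (δ₁·ψ + ψ·δ₂ᵀ = 0 and ψ is not of the form δ₁·φ + φ·δ₂ᵀ) or (δ₁ᵀ·ψ + ψ·δ₂ = 0 and ψ is not of the form δ₁ᵀ·φ + φ·δ₂) is at most ε · |B|². In other words, for sufficiently small c and encoding rate, the probability that the homological product of two uniformly random boundary operators has distance less than c·M² is o(1). -/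

import Mathlib

open Matrix

/-- The weight of a matrix over `ZMod 2`: its number of nonzero entries. -/
def mwt {m n : ℕ} (A : Matrix (Fin m) (Fin n) (ZMod 2)) : ℕ :=
  (Finset.univ.filter fun p : Fin m × Fin n => A p.1 p.2 ≠ 0).card

section HP
namespace HP

abbrev F2 := ZMod 2
abbrev X (M : ℕ) := Fin M → ZMod 2
abbrev Mt (M : ℕ) := Matrix (Fin M) (Fin M) (ZMod 2)

/-- Coordinate subspace supported on `I`. -/
def E {M : ℕ} (I : Finset (Fin M)) : Submodule (ZMod 2) (X M) where
  carrier := {x | ∀ i, i ∉ I → x i = 0}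
  add_mem' := by
    intro a b ha hb i hi
    simp [ha i hi, hb i hi]
  zero_mem' := by intro i _; rfl
  smul_mem' := by
    intro c x hx i hi
    simp [hx i hi]

lemma mem_E {M : ℕ} {I : Finset (Fin M)} {x : X M} : x ∈ E I ↔ ∀ i, i ∉ I → x i = 0 := Iff.rfl

/-- Diagonal projection killing coordinates in `I`. -/
def D {M : ℕ} (I : Finset (Fin M)) : Mt M := Matrix.diagonal fun i => if i ∈ I then 0 else 1

lemma D_mulVec {M : ℕ} (I : Finset (Fin M)) (x : X M) (i : Fin M) :
    (D I *ᵥ x) i = if i ∈ I then 0 else x i := by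
  simp [D, Matrix.mulVec_diagonal]

lemma D_transpose {M : ℕ} (I : Finset (Fin M)) : (D I)ᵀ = D I := by
  simp [D]

lemma sub_D_mem {M : ℕ} (I : Finset (Fin M)) (x : X M) : x - D I *ᵥ x ∈ E I := by
  intro i hi
  simp [D_mulVec, hi]

lemma D_eq_zero {M : ℕ} {I : Finset (Fin M)} {x : X M} (hx : x ∈ E I) : D I *ᵥ x = 0 := by
  ext i
  rw [D_mulVec]
  split_ifs with h
  · rfl
  · exact hx i h

lemma finrank_E_le {M : ℕ} (I : Finset (Fin M)) : Module.finrank (ZMod 2) (E I) ≤ I.card := by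
  let f : E I →ₗ[ZMod 2] (I → ZMod 2) :=
    (LinearMap.funLeft (ZMod 2) (ZMod 2) (fun i : I => (i : Fin M))) ∘ₗ (E I).subtype
  have hf : Function.Injective f := by
    intro a b hab
    ext i
    by_cases hi : i ∈ I
    · exact congrFun hab ⟨i, hi⟩
    · rw [a.2 i hi, b.2 i hi]
  simpa using LinearMap.finrank_le_finrank_of_injective hf

/-- the space of elements of `T` which `δ` maps into `T`. -/
def Inv {M : ℕ} (δ : Mt M) (T : Submodule (ZMod 2) (X M)) : Submodule (ZMod 2) (X M) :=
  T ⊓ T.comap δ.mulVecLin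

lemma mem_Inv {M : ℕ} {δ : Mt M} {T : Submodule (ZMod 2) (X M)} {x : X M} :
    x ∈ Inv δ T ↔ x ∈ T ∧ δ *ᵥ x ∈ T := Iff.rfl

lemma exists_homotopy {M : ℕ} (δ : Mt M) (I : Finset (Fin M)) (hI : Inv δ (E I) = ⊥) :
    ∃ h : Mt M, (∀ x, h *ᵥ x ∈ E I) ∧ (∀ x ∈ E I, h *ᵥ x = 0) ∧
      (∀ x ∈ E I, h *ᵥ (δ *ᵥ x) = x) := by
  let f : E I →ₗ[ZMod 2] X M := (D I * δ).mulVecLin ∘ₗ (E I).subtype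
  have hf : LinearMap.ker f = ⊥ := by
    rw [LinearMap.ker_eq_bot']
    intro w hw
    have h1 : (w : X M) ∈ Inv δ (E I) := by
      refine ⟨w.2, ?_⟩
      have hw' : D I *ᵥ (δ *ᵥ (w : X M)) = 0 := by
        simpa [f] using hw
      have := sub_D_mem I (δ *ᵥ (w : X M))
      rw [hw', sub_zero] at this
      exact this
    rw [hI] at h1
    exact Subtype.ext ((Submodule.mem_bot _).1 h1)
  obtain ⟨k, hk⟩ := f.exists_leftInverse_of_injective hf
  refine ⟨LinearMap.toMatrix' ((E I).subtype ∘ₗ k ∘ₗ (D I).mulVecLin), ?_, ?_, ?_⟩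
  · intro x
    rw [LinearMap.toMatrix'_mulVec]
    exact (k _).2
  · intro x hx
    rw [LinearMap.toMatrix'_mulVec]
    simp [D_eq_zero hx]
  · intro x hx
    rw [LinearMap.toMatrix'_mulVec]
    have := LinearMap.congr_fun hk ⟨x, hx⟩
    simp [f] at this
    simp [this]

/-- pseudo-projection `1 + hδ + δh`. -/
def Q {M : ℕ} (δ h : Mt M) : Mt M := 1 + h * δ + δ * h

lemma char2 {M : ℕ} (a : Mt M) : a + a = 0 := by
  ext i j
  exact CharTwo.add_self_eq_zero _

lemma char2v {M : ℕ} (a : X M) : a + a = 0 := by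
  ext i
  exact CharTwo.add_self_eq_zero _

lemma Q_mul_D {M : ℕ} {δ h : Mt M} {I : Finset (Fin M)} 
    (h2 : ∀ x ∈ E I, h *ᵥ x = 0) (h3 : ∀ x ∈ E I, h *ᵥ (δ *ᵥ x) = x) :
    Q δ h * D I = Q δ h := by
  have key : ∀ x ∈ E I, Q δ h *ᵥ x = 0 := by
    intro x hx
    simp only [Q, Matrix.add_mulVec, Matrix.one_mulVec, ← Matrix.mulVec_mulVec, h2 x hx, h3 x hx,
      Matrix.mulVec_zero, add_zero, char2v]
  apply Matrix.toLin'.injective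
  apply LinearMap.ext
  intro y
  have := key _ (sub_D_mem I y)
  rw [Matrix.mulVec_sub, sub_eq_zero] at this
  rw [Matrix.toLin'_apply, Matrix.toLin'_apply, ← Matrix.mulVec_mulVec]
  exact this.symm

lemma Q_comm {M : ℕ} {δ : Mt M} (h : Mt M) (hδ : δ * δ = 0) : Q δ h * δ = δ * Q δ h := by
  have e1 : h * δ * δ = 0 := by rw [mul_assoc, hδ, mul_zero]
  have e2 : δ * (δ * h) = 0 := by rw [← mul_assoc, hδ, zero_mul]
  simp only [Q, add_mul, mul_add, one_mul, mul_one, e1, e2, mul_assoc]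
  abel

lemma boundary_of_zero {M : ℕ} {δ₁ δ₂ ψ : Mt M} {I J : Finset (Fin M)}
    (hI : Inv δ₁ (E I) = ⊥) (hJ : Inv δ₂ (E J) = ⊥)
    (h1 : δ₁ * δ₁ = 0) 
    (hψ : δ₁ * ψ + ψ * δ₂ᵀ = 0) (hz : D I * ψ * D J = 0) :
    ∃ φ : Mt M, ψ = δ₁ * φ + φ * δ₂ᵀ := by
  obtain ⟨a, -, a2, a3⟩ := exists_homotopy δ₁ I hI
  obtain ⟨b, -, b2, b3⟩ := exists_homotopy δ₂ J hJ
  have hψ' : δ₁ * ψ = ψ * δ₂ᵀ := by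
    have := eq_neg_of_add_eq_zero_left hψ
    rw [this, eq_comm, ← sub_eq_zero, sub_neg_eq_add, char2]
  have qa := Q_mul_D a2 a3
  have qb := Q_mul_D b2 b3
  have qb' : D J * (Q δ₂ b)ᵀ = (Q δ₂ b)ᵀ := by
    conv_rhs => rw [← qb]
    rw [Matrix.transpose_mul, D_transpose]
  have hq : Q δ₁ a * ψ * (Q δ₂ b)ᵀ = 0 := by
    rw [← qa, ← qb']
    have : Q δ₁ a * D I * ψ * (D J * (Q δ₂ b)ᵀ) = Q δ₁ a * (D I * ψ * D J) * (Q δ₂ b)ᵀ := by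
      noncomm_ring
    rw [this, hz]; simp
  set χ := Q δ₁ a * ψ with hχ
  have c1 : δ₁ * χ = χ * δ₂ᵀ := by
    rw [hχ, ← mul_assoc, ← Q_comm a h1, mul_assoc, hψ', mul_assoc]
  have e1 : χ = ψ + (δ₁ * (a * ψ) + (a * ψ) * δ₂ᵀ) := by
    rw [hχ, Q, mul_assoc a ψ, ← hψ']
    noncomm_ring
  have e2 : (0 : Mt M) = χ + (δ₁ * (χ * bᵀ) + (χ * bᵀ) * δ₂ᵀ) := by
    rw [← hq, Q, Matrix.transpose_add, Matrix.transpose_add, Matrix.transpose_mul,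
      Matrix.transpose_mul, Matrix.transpose_one, ← mul_assoc δ₁, c1]
    noncomm_ring
  refine ⟨a * ψ + χ * bᵀ, ?_⟩
  have e3 : ψ = χ + (δ₁ * (a * ψ) + (a * ψ) * δ₂ᵀ) := by
    nth_rewrite 1 [e1]
    rw [add_assoc, char2, add_zero]
  have e4 : χ = (δ₁ * (χ * bᵀ) + (χ * bᵀ) * δ₂ᵀ) := by
    have := congrArg (χ + ·) e2
    simpa [← add_assoc, char2] using this
  rw [mul_add, add_mul]
  nth_rewrite 1 [e3]
  nth_rewrite 1 [e4]
  abel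

lemma rank_bound {M : ℕ} {δ₁ δ₂ ψ : Mt M} {I J : Finset (Fin M)}
    (hI : Inv δ₁ (E I) = ⊥) 
    (h1 : δ₁ * δ₁ = 0) 
    (hψ : δ₁ * ψ + ψ * δ₂ᵀ = 0) :
    (D I * ψ * D J).rank ≤
      Module.finrank (ZMod 2) (Inv δ₁ (LinearMap.range (D I * ψ * D J).mulVecLin ⊔ E I)) +
      Module.finrank (ZMod 2) (Inv δ₂ (LinearMap.range (D I * ψ * D J)ᵀ.mulVecLin ⊔ E J)) := by
  obtain ⟨a, a1, a2, a3⟩ := exists_homotopy δ₁ I hI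
  have hψ' : δ₁ * ψ = ψ * δ₂ᵀ := by
    have := eq_neg_of_add_eq_zero_left hψ
    rw [this, eq_comm, ← sub_eq_zero, sub_neg_eq_add, char2]
  have qa := Q_mul_D a2 a3
  set θ := D I * ψ * D J with hθ
  set V := LinearMap.range θ.mulVecLin with hV
  set q := Q δ₁ a with hq
  have hqθ : q * θ = q * ψ * D J := by
    rw [hθ, ← mul_assoc, ← mul_assoc, qa]
  -- second part
  have s2 : (q * θ).rank ≤ 
      Module.finrank (ZMod 2) (Inv δ₂ (LinearMap.range θᵀ.mulVecLin ⊔ E J)) := by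
    have g1 : (q * θ).rank ≤ (q * ψ)ᵀ.rank := by
      rw [hqθ, Matrix.rank_transpose]
      exact Matrix.rank_mul_le_left _ _
    refine g1.trans (Submodule.finrank_mono ?_)
    have gen : ∀ p : Mt M, p * D I = p → ∀ x, (p * ψ)ᵀ *ᵥ x ∈ 
        LinearMap.range θᵀ.mulVecLin ⊔ E J := by
      intro p hp x
      have : (p * ψ)ᵀ *ᵥ x = θᵀ *ᵥ (pᵀ *ᵥ x) + 
          ((p * ψ)ᵀ *ᵥ x - D J *ᵥ ((p * ψ)ᵀ *ᵥ x)) := by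
        have : θᵀ *ᵥ (pᵀ *ᵥ x) = D J *ᵥ ((p * ψ)ᵀ *ᵥ x) := by
          rw [Matrix.mulVec_mulVec, Matrix.mulVec_mulVec, ← Matrix.transpose_mul]
          rw [← D_transpose J, ← Matrix.transpose_mul, hθ, ← mul_assoc, ← mul_assoc, hp]
        rw [this]; abel
      rw [this]
      exact Submodule.add_mem_sup ⟨_, rfl⟩ (sub_D_mem _ _)
    rintro _ ⟨x, rfl⟩
    refine ⟨gen q qa x, ?_⟩
    show δ₂ *ᵥ ((q * ψ)ᵀ *ᵥ x) ∈ LinearMap.range θᵀ.mulVecLin ⊔ E J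
    have : δ₂ *ᵥ ((q * ψ)ᵀ *ᵥ x) = ((q * δ₁) * ψ)ᵀ *ᵥ x := by
      rw [Matrix.mulVec_mulVec]
      nth_rewrite 1 [← Matrix.transpose_transpose δ₂]
      rw [← Matrix.transpose_mul, mul_assoc, ← hψ', mul_assoc]
    rw [this]
    apply gen
    rw [Q_comm a h1, mul_assoc, qa]
  -- first part
  have hVoff : ∀ v ∈ V, v ∈ E I → v = 0 := by
    rintro _ ⟨x, rfl⟩ hx
    have := D_eq_zero hx
    rw [← this]
    ext i
    simp only [Matrix.mulVecLin_apply, hθ, mul_assoc, ← Matrix.mulVec_mulVec, D_mulVec]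
    split_ifs <;> rfl
  have s1 : Module.finrank (ZMod 2) (LinearMap.ker (q.mulVecLin.domRestrict V)) ≤ 
      Module.finrank (ZMod 2) (Inv δ₁ (V ⊔ E I)) := by
    have qx : ∀ v : X M, q *ᵥ v = 0 → δ₁ *ᵥ (a *ᵥ v) = v + a *ᵥ (δ₁ *ᵥ v) := by
      intro v hv
      rw [hq, Q, Matrix.add_mulVec, Matrix.add_mulVec, Matrix.one_mulVec, ← Matrix.mulVec_mulVec,
        ← Matrix.mulVec_mulVec] at hv
      have := congrArg (· + δ₁ *ᵥ (a *ᵥ v)) hv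
      simp only [add_assoc, char2v, add_zero, zero_add] at this
      exact this.symm
    let f : LinearMap.ker (q.mulVecLin.domRestrict V) →ₗ[ZMod 2] Inv δ₁ (V ⊔ E I) :=
      LinearMap.codRestrict _ (a.mulVecLin ∘ₗ V.subtype ∘ₗ Submodule.subtype _) (by
        rintro ⟨⟨v, hv⟩, hv2⟩
        have hv3 : q *ᵥ v = 0 := by simpa using hv2
        refine ⟨Submodule.mem_sup_right (a1 v), ?_⟩
        show δ₁ *ᵥ (a *ᵥ v) ∈ V ⊔ E I
        rw [qx v hv3]
        exact Submodule.add_mem_sup hv (a1 _))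
    have hf : Function.Injective f := by
      rw [injective_iff_map_eq_zero]
      rintro ⟨⟨v, hv⟩, hv2⟩ h0
      have hv3 : q *ᵥ v = 0 := by simpa using hv2
      have h0' : a *ᵥ v = 0 := congrArg Subtype.val h0
      have := qx v hv3
      rw [h0', Matrix.mulVec_zero] at this
      have hvE : v ∈ E I := by
        have e : v = a *ᵥ (δ₁ *ᵥ v) := by
          have := congrArg (· + a *ᵥ (δ₁ *ᵥ v)) this
          simp only [add_assoc, char2v, add_zero, zero_add] at this
          exact this.symm
        rw [e]; exact a1 _
      have := hVoff v hv hvE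
      subst this
      rfl
    exact LinearMap.finrank_le_finrank_of_injective hf
  have s3 := LinearMap.finrank_range_add_finrank_ker (q.mulVecLin.domRestrict V)
  have s4 : Module.finrank (ZMod 2) (LinearMap.range (q.mulVecLin.domRestrict V)) = 
      (q * θ).rank := by
    rw [LinearMap.range_domRestrict, hV, ← LinearMap.range_comp, Matrix.rank,
      ← Matrix.mulVecLin_mul]
  have s5 : θ.rank = Module.finrank (ZMod 2) V := rfl
  omega

end HP
end HP
section HP2
namespace HP
open Finset Module

open Classical in
/-- all linearly independent `d`-tuples -/
noncomputable def LI (M d : ℕ) : Finset (Fin d → X M) :=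
  univ.filter fun z => LinearIndependent (ZMod 2) z

lemma card_LI {M d : ℕ} (hd : d ≤ M) : (LI M d).card = ∏ i : Fin d, (2 ^ M - 2 ^ i.val) := by
  classical
  have := card_linearIndependent (K := ZMod 2) (V := X M) (k := d) (by simpa using hd)
  simp only [ZMod.card, Module.finrank_fin_fun] at this
  rw [← this, Nat.card_eq_fintype_card, Fintype.card_subtype, LI]

open Classical in
lemma card_LI_ker {M d L : ℕ} (δ : Mt M) (hL : δ.rank = L) :
    ((LI M d).filter fun z => ∀ i, δ *ᵥ z i = 0).card * 2 ^ (L * d) ≤ (LI M d).card := by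
  have hk : finrank (ZMod 2) (LinearMap.ker δ.mulVecLin) + L = M := by
    have := LinearMap.finrank_range_add_finrank_ker δ.mulVecLin
    rw [← hL, Matrix.rank]
    simp only [Module.finrank_fin_fun] at this
    omega
  set K := LinearMap.ker δ.mulVecLin with hK
  have h1 : ((LI M d).filter fun z => ∀ i, δ *ᵥ z i = 0).card ≤
      Fintype.card {s : Fin d → K // LinearIndependent (ZMod 2) s} := by
    rw [Fintype.card_subtype]
    refine Finset.card_le_card_of_surjOn (fun s i => (s i : X M)) ?_
    intro z hz
    simp only [LI, coe_filter, mem_filter, mem_univ, true_and, Set.mem_ofPred_eq] at hz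
    refine ⟨fun i => ⟨z i, by simpa [hK] using hz.2 i⟩, ?_, rfl⟩
    simp only [coe_filter, mem_univ, true_and, Set.mem_ofPred_eq]
    exact LinearIndependent.of_comp K.subtype hz.1
  by_cases hd : d ≤ finrank (ZMod 2) K
  · rw [← Nat.card_eq_fintype_card, card_linearIndependent hd, ZMod.card] at h1
    rw [card_LI (by omega)]
    calc _ ≤ (∏ i : Fin d, (2 ^ finrank (ZMod 2) K - 2 ^ i.val)) * 2 ^ (L * d) := by gcongr
      _ = ∏ i : Fin d, ((2 ^ finrank (ZMod 2) K - 2 ^ i.val) * 2 ^ L) := by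
        rw [Finset.prod_mul_distrib]; simp [pow_mul]
      _ ≤ _ := by
        apply Finset.prod_le_prod'
        intro i _
        rw [Nat.sub_mul, ← pow_add, hk, ← pow_add]
        exact Nat.sub_le_sub_left (Nat.pow_le_pow_right (by norm_num) (by omega)) _
  · have : Fintype.card {s : Fin d → K // LinearIndependent (ZMod 2) s} = 0 := by
      rw [Fintype.card_eq_zero_iff]
      constructor
      rintro ⟨s, hs⟩
      have := hs.fintype_card_le_finrank
      simp at this
      omega
    have h0 : ((LI M d).filter fun z => ∀ i, δ *ᵥ z i = 0).card = 0 := by omega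
    rw [h0]; simp

lemma exists_conj {M d : ℕ} {z z' : Fin d → X M} (hz : LinearIndependent (ZMod 2) z)
    (hz' : LinearIndependent (ZMod 2) z') :
    ∃ g gi : Mt M, g * gi = 1 ∧ gi * g = 1 ∧ ∀ i, g *ᵥ z i = z' i := by
  let f := (Basis.span hz).equiv (Basis.span hz') (Equiv.refl _)
  obtain ⟨g, hg⟩ := Submodule.exists_linearEquiv_restrict_eq f
  refine ⟨LinearMap.toMatrix' g.toLinearMap, LinearMap.toMatrix' g.symm.toLinearMap, ?_, ?_, ?_⟩
  · rw [← LinearMap.toMatrix'_comp]; simp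
  · rw [← LinearMap.toMatrix'_comp]; simp
  · intro i
    rw [LinearMap.toMatrix'_mulVec]
    have h1 := hg ⟨z i, Submodule.subset_span ⟨i, rfl⟩⟩
    have h2 : f ⟨z i, Submodule.subset_span ⟨i, rfl⟩⟩ = ⟨z' i, Submodule.subset_span ⟨i, rfl⟩⟩ := by
      have e1 : (⟨z i, Submodule.subset_span ⟨i, rfl⟩⟩ : Submodule.span (ZMod 2) (Set.range z)) 
        = Basis.span hz i := by
        ext1; rw [Basis.span_apply]
      have e2 : (⟨z' i, Submodule.subset_span ⟨i, rfl⟩⟩ : Submodule.span (ZMod 2) (Set.range z')) 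
        = Basis.span hz' i := by
        ext1; rw [Basis.span_apply]
      rw [e1, e2, Basis.equiv_apply]; rfl
    rw [h2] at h1
    exact h1.symm

/-- conjugation-invariant family of boundary operators of rank `L`. -/
structure Good {M : ℕ} (B : Finset (Mt M)) (L : ℕ) : Prop where
  sq : ∀ δ ∈ B, δ * δ = 0
  rk : ∀ δ ∈ B, δ.rank = L
  conj : ∀ δ ∈ B, ∀ g gi : Mt M, g * gi = 1 → gi * g = 1 → g * δ * gi ∈ B

open Classical in
lemma count_const {M d L : ℕ} {B : Finset (Mt M)} (hB : Good B L) {z z' : Fin d → X M}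
    (hz : LinearIndependent (ZMod 2) z) (hz' : LinearIndependent (ZMod 2) z') :
    (B.filter fun δ => ∀ i, δ *ᵥ z i = 0).card ≤ (B.filter fun δ => ∀ i, δ *ᵥ z' i = 0).card := by
  obtain ⟨g, gi, h1, h2, h3⟩ := exists_conj hz hz'
  refine Finset.card_le_card_of_injOn (fun δ => g * δ * gi) ?_ ?_
  · intro δ hδ
    simp only [coe_filter, Set.mem_ofPred_eq] at hδ ⊢
    refine ⟨hB.conj _ hδ.1 _ _ h1 h2, fun i => ?_⟩
    rw [← h3, Matrix.mulVec_mulVec, mul_assoc, h2, mul_one, ← Matrix.mulVec_mulVec, hδ.2 i,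
      Matrix.mulVec_zero]
  · intro a _ b _ hab
    have : gi * (g * a * gi) * g = gi * (g * b * gi) * g := by
      simp only at hab; rw [hab]
    have e : ∀ c : Mt M, gi * (g * c * gi) * g = c := by
      intro c
      rw [← mul_assoc, ← mul_assoc, h2, one_mul, mul_assoc, h2, mul_one]
    rwa [e, e] at this

open Classical in
lemma count_ker {M d L : ℕ} {B : Finset (Mt M)} (hB : Good B L) {z : Fin d → X M}
    (hz : LinearIndependent (ZMod 2) z) :
    (B.filter fun δ => ∀ i, δ *ᵥ z i = 0).card * 2 ^ (L * d) ≤ B.card := by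
  set N := (B.filter fun δ => ∀ i, δ *ᵥ z i = 0).card with hN
  have hpos : 0 < (LI M d).card := Finset.card_pos.2 ⟨z, by simp [LI, hz]⟩
  have dc := Finset.sum_card_bipartiteAbove_eq_sum_card_bipartiteBelow 
    (s := B) (t := LI M d) (fun δ z => ∀ i, δ *ᵥ z i = 0)
  have l1 : (LI M d).card * N ≤ ∑ b ∈ LI M d, 
      (Finset.bipartiteBelow (fun (δ : Mt M) (z : Fin d → X M) => ∀ i, δ *ᵥ z i = 0) B b).card := by
    rw [← smul_eq_mul]
    apply Finset.card_nsmul_le_sum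
    intro z' hz'
    exact count_const hB hz (by simpa [LI] using hz')
  rw [← dc] at l1
  have l2 : (∑ a ∈ B, (Finset.bipartiteAbove (fun (δ : Mt M) (z : Fin d → X M) => 
      ∀ i, δ *ᵥ z i = 0) (LI M d) a).card) * 2 ^ (L * d) ≤ B.card * (LI M d).card := by
    rw [Finset.sum_mul, ← smul_eq_mul]
    apply Finset.sum_le_card_nsmul
    intro δ hδ
    exact card_LI_ker δ (hB.rk δ hδ)
  have l3 := (Nat.mul_le_mul_right (2 ^ (L * d)) l1).trans l2
  have : (LI M d).card * (N * 2 ^ (L * d)) ≤ (LI M d).card * B.card := by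
    rw [← mul_assoc, mul_comm (LI M d).card B.card]; exact l3
  exact Nat.le_of_mul_le_mul_left this hpos

open Classical in
lemma count_sub {M d L : ℕ} {B : Finset (Mt M)} (hB : Good B L) (Z : Submodule (ZMod 2) (X M))
    (hd : d ≤ finrank (ZMod 2) Z) :
    (B.filter fun δ => ∀ z ∈ Z, δ *ᵥ z = 0).card * 2 ^ (L * d) ≤ B.card := by
  obtain ⟨f, hf⟩ := exists_linearIndependent_of_le_finrank hd
  have hf' : LinearIndependent (ZMod 2) (fun i => (f i : X M)) :=
    hf.map' Z.subtype (Submodule.ker_subtype Z)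
  refine le_trans (Nat.mul_le_mul_right _ (Finset.card_le_card ?_)) (count_ker hB hf')
  intro δ hδ
  simp only [mem_filter] at hδ ⊢
  exact ⟨hδ.1, fun i => hδ.2 _ (f i).2⟩

open Classical in
lemma count_map {M d L : ℕ} {B : Finset (Mt M)} (hB : Good B L) {U : Type*} [AddCommGroup U]
    [Module (ZMod 2) U] [Module.Finite (ZMod 2) U] (a c : U →ₗ[ZMod 2] X M)
    (hd : 2 * d ≤ finrank (ZMod 2) (LinearMap.range a) + 1) :
    (B.filter fun δ => ∀ u, δ *ᵥ (a u) = c u).card * 2 ^ (L * d) ≤ B.card := by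
  by_cases h : d ≤ finrank (ZMod 2) (LinearMap.range c)
  · refine le_trans (Nat.mul_le_mul_right _ (Finset.card_le_card ?_)) (count_sub hB _ h)
    intro δ hδ
    simp only [mem_filter] at hδ ⊢
    refine ⟨hδ.1, ?_⟩
    rintro _ ⟨u, rfl⟩
    rw [← hδ.2, Matrix.mulVec_mulVec, hB.sq _ hδ.1, Matrix.zero_mulVec]
  · have h2 : d ≤ finrank (ZMod 2) (LinearMap.range (a.domRestrict (LinearMap.ker c))) := by
      have e1 := LinearMap.finrank_range_add_finrank_ker a
      have e2 := LinearMap.finrank_range_add_finrank_ker c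
      have e3 := LinearMap.finrank_range_add_finrank_ker (a.domRestrict (LinearMap.ker c))
      have e4 : finrank (ZMod 2) (LinearMap.ker (a.domRestrict (LinearMap.ker c))) ≤ 
          finrank (ZMod 2) (LinearMap.ker a) := by
        let f : LinearMap.ker (a.domRestrict (LinearMap.ker c)) →ₗ[ZMod 2] LinearMap.ker a :=
          LinearMap.codRestrict _ ((LinearMap.ker c).subtype ∘ₗ Submodule.subtype _) (by
            rintro ⟨⟨v, hv⟩, hv2⟩
            simpa using hv2)
        have hf : Function.Injective f := by
          intro x y hxy
          have := congrArg Subtype.val hxy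
          exact Subtype.ext (Subtype.ext this)
        exact LinearMap.finrank_le_finrank_of_injective hf
      omega
    refine le_trans (Nat.mul_le_mul_right _ (Finset.card_le_card ?_)) (count_sub hB _ h2)
    intro δ hδ
    simp only [mem_filter] at hδ ⊢
    refine ⟨hδ.1, ?_⟩
    rintro _ ⟨⟨u, hu⟩, rfl⟩
    have := hδ.2 u
    rw [LinearMap.mem_ker.1 hu] at this
    simpa using this

open Classical in
/-- few `δ` have large `Inv δ T`. -/
lemma count_Inv {M d k L t : ℕ} {B : Finset (Mt M)} (hB : Good B L) (T : Submodule (ZMod 2) (X M))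
    (hd : 2 * d ≤ k + 1) (ht : finrank (ZMod 2) T ≤ t) :
    (B.filter fun δ => k ≤ finrank (ZMod 2) (Inv δ T)).card * 2 ^ (L * d) ≤ 
      2 ^ (2 * t * k) * B.card := by
  let P : Finset ((Fin k → T) × (Fin k → T)) := univ.filter fun p => 
    LinearIndependent (ZMod 2) (fun i => (p.1 i : X M))
  have hsub : (B.filter fun δ => k ≤ finrank (ZMod 2) (Inv δ T)) ⊆ 
      P.biUnion fun p => B.filter fun δ => ∀ i, δ *ᵥ (p.1 i : X M) = p.2 i := by
    intro δ hδ
    simp only [mem_filter] at hδ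
    obtain ⟨f, hf⟩ := exists_linearIndependent_of_le_finrank hδ.2
    have hf' : LinearIndependent (ZMod 2) (fun i => (f i : X M)) :=
      hf.map' (Inv δ T).subtype (Submodule.ker_subtype _)
    simp only [mem_biUnion, mem_filter, P, mem_univ, true_and]
    exact ⟨(fun i => ⟨f i, (f i).2.1⟩, fun i => ⟨δ *ᵥ (f i : X M), (f i).2.2⟩), hf', hδ.1, 
      fun i => rfl⟩
  have hP : P.card ≤ 2 ^ (2 * t * k) := by
    refine (Finset.card_le_univ _).trans ?_
    have : Fintype.card T = 2 ^ finrank (ZMod 2) T := by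
      rw [Module.card_eq_pow_finrank (K := ZMod 2), ZMod.card]
    simp only [Fintype.card_prod, Fintype.card_fun, Fintype.card_fin, this]
    rw [← pow_mul, ← pow_add]
    apply Nat.pow_le_pow_right (by norm_num)
    nlinarith [Nat.mul_le_mul_right k ht]
  have hone : ∀ p ∈ P, (B.filter fun δ => ∀ i, δ *ᵥ (p.1 i : X M) = p.2 i).card * 2 ^ (L * d) 
      ≤ B.card := by
    intro p hp
    have hli : LinearIndependent (ZMod 2) (fun i => (p.1 i : X M)) := by simpa [P] using hp
    have hr : finrank (ZMod 2) (LinearMap.range 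
        (Fintype.linearCombination (ZMod 2) (fun i => (p.1 i : X M)))) = k := by
      rw [Fintype.range_linearCombination, finrank_span_eq_card hli, Fintype.card_fin]
    refine le_trans (Nat.mul_le_mul_right _ (Finset.card_le_card ?_)) (count_map hB 
      (Fintype.linearCombination (ZMod 2) (fun i => (p.1 i : X M)))
      (Fintype.linearCombination (ZMod 2) (fun i => (p.2 i : X M))) (d := d) (by omega))
    intro δ hδ
    simp only [mem_filter] at hδ ⊢
    refine ⟨hδ.1, fun u => ?_⟩
    simp only [Fintype.linearCombination_apply, Matrix.mulVec_sum, Matrix.mulVec_smul, hδ.2]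
  calc _ ≤ (∑ p ∈ P, (B.filter fun δ => ∀ i, δ *ᵥ (p.1 i : X M) = p.2 i).card) * 2 ^ (L * d) := by
        gcongr
        exact (Finset.card_le_card hsub).trans Finset.card_biUnion_le
    _ ≤ P.card * B.card := by
        rw [Finset.sum_mul, ← smul_eq_mul]
        exact Finset.sum_le_card_nsmul _ _ _ hone
    _ ≤ _ := by gcongr

end HP
end HP2
section HP3
namespace HP
open Finset Module

open Classical in
/-- low-weight vectors -/
noncomputable def Low (ι : Type) [Fintype ι] : Finset (ι → ZMod 2) :=
  univ.filter fun v => 131072 * hammingNorm v ≤ Fintype.card ι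

lemma mem_Low {ι : Type} [Fintype ι] {v : ι → ZMod 2} :
    v ∈ Low ι ↔ 131072 * hammingNorm v ≤ Fintype.card ι := by
  classical
  simp [Low]

lemma gen_fun {ι : Type} [Fintype ι] [DecidableEq ι] (x : ℝ) :
    ∑ v : ι → ZMod 2, x ^ hammingNorm v = (1 + x) ^ Fintype.card ι := by
  classical
  have h : ∀ v : ι → ZMod 2, x ^ hammingNorm v = ∏ i, (if v i ≠ 0 then x else 1) := by
    intro v
    rw [Finset.prod_ite]
    simp [hammingNorm]
  simp_rw [h]
  have := Finset.prod_univ_sum (fun _ : ι => (univ : Finset (ZMod 2)))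
    (fun _ a => if a ≠ 0 then x else (1 : ℝ))
  rw [Fintype.piFinset_univ] at this
  rw [← this]
  have h2 : ∑ a : ZMod 2, (if a ≠ 0 then x else (1 : ℝ)) = 1 + x := by
    rw [show (univ : Finset (ZMod 2)) = {0, 1} from by decide]
    rw [Finset.sum_pair (by decide)]
    simp
  simp only [h2, Finset.prod_const, Finset.card_univ]

lemma card_Low {ι : Type} [Fintype ι] :
    ((Low ι).card : ℝ) ≤ (2 : ℝ) ^ ((Fintype.card ι : ℝ) / 4096) := by
  classical
  set n := Fintype.card ι
  have h1 : ∀ v ∈ Low ι, (2 : ℝ) ^ (-(14 * (n : ℝ) / 131072)) ≤ (2⁻¹ ^ 14 : ℝ) ^ hammingNorm v := by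
    intro v hv
    rw [mem_Low] at hv
    have hv' : 131072 * (hammingNorm v : ℝ) ≤ n := by exact_mod_cast hv
    have : (2⁻¹ ^ 14 : ℝ) ^ hammingNorm v = (2 : ℝ) ^ (-(14 * (hammingNorm v : ℝ))) := by
      rw [Real.rpow_neg (by norm_num), ← pow_mul, inv_pow, ← Real.rpow_natCast]
      push_cast; rfl
    rw [this]
    apply Real.rpow_le_rpow_of_exponent_le (by norm_num)
    linarith
  have h2 : ((Low ι).card : ℝ) * (2 : ℝ) ^ (-(14 * (n : ℝ) / 131072)) ≤ (1 + 2⁻¹ ^ 14) ^ n := by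
    rw [← gen_fun (ι := ι), ← nsmul_eq_mul]
    refine (Finset.card_nsmul_le_sum _ _ _ h1).trans ?_
    exact Finset.sum_le_sum_of_subset_of_nonneg (Finset.subset_univ _) (fun _ _ _ => by positivity)
  have h3 : (1 + 2⁻¹ ^ 14 : ℝ) ≤ (2 : ℝ) ^ ((1 : ℝ) / 8192) := by
    rw [Real.rpow_def_of_pos (by norm_num)]
    refine le_trans ?_ (Real.add_one_le_exp _)
    have := Real.log_two_gt_d9
    linarith
  have h4 : (1 + 2⁻¹ ^ 14 : ℝ) ^ n ≤ (2 : ℝ) ^ ((n : ℝ) / 8192) := by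
    refine (pow_le_pow_left₀ (by norm_num) h3 n).trans ?_
    rw [← Real.rpow_natCast, ← Real.rpow_mul (by norm_num)]
    apply le_of_eq; congr 1; ring
  have h5 := h2.trans h4
  rw [Real.rpow_neg (by norm_num), ← div_eq_mul_inv, div_le_iff₀ (by positivity),
    ← Real.rpow_add (by norm_num)] at h5
  refine h5.trans (Real.rpow_le_rpow_of_exponent_le (by norm_num) ?_)
  have : (0 : ℝ) ≤ n := by positivity
  linarith

open Classical in
/-- support of a vector -/
noncomputable def supp {M : ℕ} (u : X M) : Finset (Fin M) := univ.filter fun i => u i ≠ 0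

/-- the test space -/
noncomputable def TT {M R : ℕ} (u : X M) (v : Fin R → X M) : Submodule (ZMod 2) (X M) :=
  Submodule.span (ZMod 2) (Set.range v) ⊔ E (supp u)

/-- `δ` is bad at rank `R` -/
def BadR {M : ℕ} (R : ℕ) (δ : Mt M) : Prop :=
  ∃ u ∈ Low (Fin M), ∃ v : Fin R → X M, (∀ i, v i ∈ Low (Fin M)) ∧
    R ≤ 2 * finrank (ZMod 2) (Inv δ (TT u v))

/-- `δ` is bad -/
def Bad {M : ℕ} (δ : Mt M) : Prop := ∃ R, 1 ≤ R ∧ 256 * R ≤ M ∧ BadR R δ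

lemma finrank_TT {M R : ℕ} (u : X M) (hu : u ∈ Low (Fin M)) (v : Fin R → X M) :
    finrank (ZMod 2) (TT u v) ≤ R + M / 131072 := by
  refine (Submodule.finrank_add_le_finrank_add_finrank _ _).trans ?_
  have h1 := finrank_range_le_card (R := ZMod 2) v
  have h2 := finrank_E_le (supp u)
  have h3 : (supp u).card = hammingNorm u := by
    classical
    simp [supp, hammingNorm]
  rw [mem_Low, Fintype.card_fin] at hu
  have h4 : (supp u).card ≤ M / 131072 := by omega
  simp only [Fintype.card_fin, Set.finrank] at h1
  omega

open Classical in
lemma count_BadR {M L R : ℕ} {B : Finset (Mt M)} (hB : Good B L) (hL : M ≤ 4 * L) (hR : 1 ≤ R)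
    (hRM : 256 * R ≤ M) :
    ((B.filter fun δ => BadR R δ).card : ℝ) ≤ (2 : ℝ) ^ (-(M : ℝ) / 32) * B.card := by
  set k := (R + 1) / 2 with hk
  set d := (k + 1) / 2 with hd
  set t := R + M / 131072 with ht
  let P : Finset (X M × (Fin R → X M)) := Low (Fin M) ×ˢ Fintype.piFinset fun _ => Low (Fin M)
  have hsub : (B.filter fun δ => BadR R δ) ⊆
      P.biUnion fun p => B.filter fun δ => k ≤ finrank (ZMod 2) (Inv δ (TT p.1 p.2)) := by
    intro δ hδ
    simp only [mem_filter] at hδ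
    obtain ⟨h0, u, hu, v, hv, h⟩ := hδ
    simp only [mem_biUnion, mem_filter, P, mem_product, Fintype.mem_piFinset]
    exact ⟨(u, v), ⟨hu, hv⟩, h0, by show k ≤ finrank (ZMod 2) (Inv δ (TT u v)); omega⟩
  have hP : (P.card : ℝ) ≤ (2 : ℝ) ^ ((R + 1 : ℝ) * (M / 4096)) := by
    have h1 := card_Low (ι := Fin M)
    simp only [P, Finset.card_product, Fintype.card_piFinset, Finset.prod_const, Finset.card_univ,
      Fintype.card_fin]
    simp only [Fintype.card_fin] at h1
    push_cast
    rw [← pow_succ']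
    refine (pow_le_pow_left₀ (by positivity) h1 _).trans ?_
    rw [← Real.rpow_natCast, ← Real.rpow_mul (by norm_num)]
    apply le_of_eq; congr 1; push_cast; ring
  have h1 : (B.filter fun δ => BadR R δ).card * 2 ^ (L * d) ≤ P.card * (2 ^ (2 * t * k) * B.card) := by
    calc _ ≤ (∑ p ∈ P, (B.filter fun δ => k ≤ finrank (ZMod 2) (Inv δ (TT p.1 p.2))).card) *
          2 ^ (L * d) := by
          gcongr
          exact (Finset.card_le_card hsub).trans Finset.card_biUnion_le
      _ ≤ _ := by
          rw [Finset.sum_mul, ← smul_eq_mul]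
          apply Finset.sum_le_card_nsmul
          intro p hp
          simp only [P, mem_product] at hp
          exact count_Inv hB _ (by omega) (finrank_TT _ hp.1 _)
  have h2 : ((B.filter fun δ => BadR R δ).card : ℝ) * 2 ^ (L * d) ≤
      P.card * (2 ^ (2 * t * k) * B.card) := by exact_mod_cast h1
  have h3 : ((B.filter fun δ => BadR R δ).card : ℝ) * (2 : ℝ) ^ ((L * d : ℕ) : ℝ) ≤
      (2 : ℝ) ^ ((R + 1 : ℝ) * (M / 4096)) * ((2 : ℝ) ^ ((2 * t * k : ℕ) : ℝ) * B.card) := by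
    rw [Real.rpow_natCast, Real.rpow_natCast]
    exact h2.trans (by gcongr)
  rw [← le_div_iff₀ (by positivity), ← mul_assoc, mul_div_right_comm, 
    ← Real.rpow_add (by norm_num), ← Real.rpow_sub (by norm_num)] at h3
  refine h3.trans (mul_le_mul_of_nonneg_right ?_ (by positivity))
  apply Real.rpow_le_rpow_of_exponent_le (by norm_num)
  have a1 : (M : ℝ) ≤ 4 * L := by exact_mod_cast hL
  have a2 : (1 : ℝ) ≤ R := by exact_mod_cast hR
  have a3 : (256 : ℝ) * R ≤ M := by exact_mod_cast hRM
  have a4 : (2 : ℝ) * k ≤ 2 * R := by exact_mod_cast (show 2 * k ≤ 2 * R by omega)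
  have a5 : (R : ℝ) ≤ 4 * d := by exact_mod_cast (show R ≤ 4 * d by omega)
  have a6 : (t : ℝ) ≤ M / 128 := by
    have : 128 * t ≤ M := by omega
    have : (128 : ℝ) * t ≤ M := by exact_mod_cast this
    linarith
  have a0 : (0 : ℝ) ≤ M := by positivity
  push_cast
  have b1 : (M : ℝ) * R ≤ (4 * L) * (4 * d) := by gcongr
  have b2 : (t : ℝ) * (2 * k) ≤ (M / 128) * (2 * R) := by gcongr
  have b3 : (M : ℝ) * 1 ≤ M * R := by gcongr
  nlinarith

open Classical in
lemma count_Bad {M L : ℕ} {B : Finset (Mt M)} (hB : Good B L) (hL : M ≤ 4 * L) :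
    ((B.filter fun δ => Bad δ).card : ℝ) ≤ M * (2 : ℝ) ^ (-(M : ℝ) / 32) * B.card := by
  have hsub : (B.filter fun δ => Bad δ) ⊆
      ((Finset.Icc 1 M).filter fun R => 256 * R ≤ M).biUnion fun R => B.filter fun δ => BadR R δ := by
    intro δ hδ
    simp only [mem_filter] at hδ
    obtain ⟨h0, R, h1, h2, h3⟩ := hδ
    simp only [mem_biUnion, mem_filter, mem_Icc]
    exact ⟨R, ⟨⟨h1, by omega⟩, h2⟩, h0, h3⟩
  have h1 : ((B.filter fun δ => Bad δ).card : ℝ) ≤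
      ∑ R ∈ (Finset.Icc 1 M).filter (fun R => 256 * R ≤ M), ((B.filter fun δ => BadR R δ).card : ℝ) := by
    exact_mod_cast (Finset.card_le_card hsub).trans Finset.card_biUnion_le
  refine h1.trans ?_
  refine (Finset.sum_le_card_nsmul _ _ ((2 : ℝ) ^ (-(M : ℝ) / 32) * B.card) ?_).trans ?_
  · intro R hR
    simp only [mem_filter, mem_Icc] at hR
    exact count_BadR hB hL hR.1.1 hR.2
  · rw [nsmul_eq_mul, mul_assoc]
    apply mul_le_mul_of_nonneg_right _ (by positivity)
    have : ((Finset.Icc 1 M).filter fun R => 256 * R ≤ M).card ≤ M := by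
      refine (Finset.card_filter_le _ _).trans ?_
      simp
    exact_mod_cast this

/-- cycle with large rank -/
def Large {M : ℕ} (δ₁ δ₂ : Mt M) : Prop :=
  ∃ ψ : Mt M, (fun p : Fin M × Fin M => ψ p.1 p.2) ∈ Low (Fin M × Fin M) ∧ M ≤ 256 * ψ.rank ∧
    δ₁ * ψ + ψ * δ₂ᵀ = 0

open Classical in
lemma count_Large1 {M L : ℕ} {B : Finset (Mt M)} (hB : Good B L) (hL : M ≤ 4 * L) (δ₁ : Mt M) :
    ((B.filter fun δ => Large δ₁ δ).card : ℝ) ≤ (2 : ℝ) ^ (-(M : ℝ) ^ 2 / 4096) * B.card := by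
  let P : Finset (Fin M × Fin M → ZMod 2) := (Low (Fin M × Fin M)).filter 
    fun f => M ≤ 256 * (Matrix.of fun i j => f (i, j)).rank
  let A : (Fin M × Fin M → ZMod 2) → Mt M := fun f => Matrix.of fun i j => f (i, j)
  set d := ((M + 255) / 256 + 1) / 2 with hd
  have hsub : (B.filter fun δ => Large δ₁ δ) ⊆
      P.biUnion fun f => B.filter fun δ => ∀ x, δ *ᵥ ((A f)ᵀ.mulVecLin x) = 
        ((A f)ᵀ * δ₁ᵀ).mulVecLin x := by
    intro δ hδ
    simp only [mem_filter] at hδ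
    obtain ⟨h0, ψ, h1, h2, h3⟩ := hδ
    simp only [mem_biUnion, mem_filter, P]
    refine ⟨_, ⟨h1, h2⟩, h0, fun x => ?_⟩
    show δ *ᵥ (ψᵀ *ᵥ x) = (ψᵀ * δ₁ᵀ) *ᵥ x
    rw [Matrix.mulVec_mulVec, ← Matrix.transpose_mul]
    congr 1
    have := eq_neg_of_add_eq_zero_left h3
    rw [this, ← sub_eq_zero, Matrix.transpose_neg, sub_neg_eq_add, Matrix.transpose_mul, 
      Matrix.transpose_transpose, char2]
  have hP : (P.card : ℝ) ≤ (2 : ℝ) ^ ((M : ℝ) ^ 2 / 4096) := by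
    have h1 := card_Low (ι := Fin M × Fin M)
    simp only [Fintype.card_prod, Fintype.card_fin] at h1
    have h2 : (P.card : ℝ) ≤ (Low (Fin M × Fin M)).card := by
      exact Nat.cast_le.2 (Finset.card_le_card (Finset.filter_subset _ _))
    refine h2.trans (h1.trans (le_of_eq ?_))
    push_cast; rw [sq]
  have hone : ∀ f ∈ P, (B.filter fun δ => ∀ x, δ *ᵥ ((A f)ᵀ.mulVecLin x) = 
      ((A f)ᵀ * δ₁ᵀ).mulVecLin x).card * 2 ^ (L * d) ≤ B.card := by
    intro f hf
    have hf2 : M ≤ 256 * (A f).rank := (Finset.mem_filter.1 hf).2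
    have h5 : finrank (ZMod 2) (LinearMap.range (A f)ᵀ.mulVecLin) = (A f).rank := by
      rw [← Matrix.rank_transpose (A f)]; rfl
    convert count_map hB (A f)ᵀ.mulVecLin ((A f)ᵀ * δ₁ᵀ).mulVecLin (d := d) (by rw [h5]; omega)
  have h1 : (B.filter fun δ => Large δ₁ δ).card * 2 ^ (L * (d)) ≤ P.card * B.card := by
    calc _ ≤ (∑ f ∈ P, (B.filter fun δ => ∀ x, δ *ᵥ ((A f)ᵀ.mulVecLin x) = 
          ((A f)ᵀ * δ₁ᵀ).mulVecLin x).card) * 2 ^ (L * d) := by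
          gcongr
          exact (Finset.card_le_card hsub).trans Finset.card_biUnion_le
      _ ≤ _ := by
          rw [Finset.sum_mul, ← smul_eq_mul]
          exact Finset.sum_le_card_nsmul _ _ _ hone
  have h2 : ((B.filter fun δ => Large δ₁ δ).card : ℝ) * 2 ^ (L * d) ≤ P.card * B.card := by 
    exact_mod_cast h1
  have h3 : ((B.filter fun δ => Large δ₁ δ).card : ℝ) * (2 : ℝ) ^ ((L * d : ℕ) : ℝ) ≤
      (2 : ℝ) ^ ((M : ℝ) ^ 2 / 4096) * B.card := by
    rw [Real.rpow_natCast]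
    exact h2.trans (by gcongr)
  rw [← le_div_iff₀ (by positivity), mul_div_right_comm, ← Real.rpow_sub (by norm_num)] at h3
  refine h3.trans (mul_le_mul_of_nonneg_right ?_ (by positivity))
  apply Real.rpow_le_rpow_of_exponent_le (by norm_num)
  have a1 : (M : ℝ) ≤ 4 * L := by exact_mod_cast hL
  have a5 : (M : ℝ) ≤ 512 * d := by exact_mod_cast (show M ≤ 512 * d by omega)
  have b1 : (M : ℝ) * M ≤ (4 * L) * (512 * d) := by gcongr
  push_cast
  nlinarith

end HP
end HP3
section HP4
namespace HP
open Finset Module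

open Classical in
/-- heavy rows -/
noncomputable def heavy {M : ℕ} (ψ : Mt M) : Finset (Fin M) :=
  univ.filter fun i => M < 131072 * hammingNorm (ψ i)

lemma mwt_eq {M : ℕ} (ψ : Mt M) : mwt ψ = ∑ i, hammingNorm (ψ i) := by
  classical
  simp only [mwt, hammingNorm, Finset.card_filter, Fintype.sum_prod_type]

lemma mwt_transpose {M : ℕ} (ψ : Mt M) : mwt ψᵀ = mwt ψ := by
  classical
  unfold mwt
  refine Finset.card_equiv (Equiv.prodComm _ _) fun p => ?_
  rw [Finset.mem_filter, Finset.mem_filter]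
  simp

lemma card_heavy {M : ℕ} (ψ : Mt M) (h : 131072 ^ 2 * mwt ψ ≤ M ^ 2) (hM : 0 < M) :
    131072 * (heavy ψ).card ≤ M := by
  classical
  have h1 : (heavy ψ).card * M ≤ 131072 * mwt ψ := by
    rw [mwt_eq, Finset.mul_sum, ← smul_eq_mul]
    refine (Finset.card_nsmul_le_sum (heavy ψ) (fun i => 131072 * hammingNorm (ψ i)) M ?_).trans ?_
    · intro i hi
      simp only [heavy, mem_filter] at hi
      exact hi.2.le
    · exact Finset.sum_le_sum_of_subset (Finset.subset_univ _)
  have h2 : M * (131072 * (heavy ψ).card) ≤ M * M := by nlinarith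
  exact Nat.le_of_mul_le_mul_left h2 hM

lemma DD_apply {M : ℕ} (ψ : Mt M) (I J : Finset (Fin M)) (i j : Fin M) :
    (D I * ψ * D J) i j = if i ∈ I then 0 else if j ∈ J then 0 else ψ i j := by
  simp only [D, Matrix.mul_diagonal, Matrix.diagonal_mul]
  split_ifs <;> simp

lemma low_col {M : ℕ} (ψ : Mt M) (I : Finset (Fin M)) (j : Fin M) :
    (D I * ψ * D (heavy ψᵀ)).col j ∈ Low (Fin M) := by
  classical
  rw [mem_Low, Fintype.card_fin]
  by_cases hj : j ∈ heavy ψᵀ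
  · have : (D I * ψ * D (heavy ψᵀ)).col j = 0 := by
      ext i
      rw [Matrix.col_apply, DD_apply]
      simp [hj]
    rw [this]; simp
  · have h1 : 131072 * hammingNorm (ψᵀ j) ≤ M := by
      simp only [heavy, mem_filter, mem_univ, true_and, not_lt] at hj
      exact hj
    refine le_trans (Nat.mul_le_mul_left _ ?_) h1
    unfold hammingNorm
    apply Finset.card_le_card
    intro i hi
    refine Finset.mem_filter.2 ⟨Finset.mem_univ _, fun h0 => (Finset.mem_filter.1 hi).2 ?_⟩
    rw [Matrix.transpose_apply] at h0
    rw [Matrix.col_apply, DD_apply, h0]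
    simp

/-- indicator vector -/
def ind {M : ℕ} (I : Finset (Fin M)) : X M := fun i => if i ∈ I then 1 else 0

lemma supp_ind {M : ℕ} (I : Finset (Fin M)) : supp (ind I) = I := by
  classical
  ext i
  simp [supp, ind]

lemma ind_low {M : ℕ} {I : Finset (Fin M)} (h : 131072 * I.card ≤ M) : ind I ∈ Low (Fin M) := by
  classical
  rw [mem_Low, Fintype.card_fin]
  have : hammingNorm (ind I) = I.card := by
    simp [hammingNorm, ind]
  rwa [this]

lemma inv_bot {M : ℕ} {δ : Mt M} (hδ : ¬ Bad δ) (hM : 256 ≤ M) {I : Finset (Fin M)}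
    (hI : 131072 * I.card ≤ M) : Inv δ (E I) = ⊥ := by
  classical
  by_contra hne
  apply hδ
  refine ⟨1, le_rfl, by omega, ind I, ind_low hI, fun _ => 0, fun _ => ?_, ?_⟩
  · rw [mem_Low]; simp
  · have hT : TT (ind I) (fun _ : Fin 1 => (0 : X M)) = E I := by
      rw [TT, supp_ind]
      simp
    rw [hT]
    have : finrank (ZMod 2) (Inv δ (E I)) ≠ 0 := by
      rwa [Ne, Submodule.finrank_eq_zero]
    omega

lemma inv_small {M : ℕ} {δ θ : Mt M} (hδ : ¬ Bad δ) {I : Finset (Fin M)}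
    (hI : 131072 * I.card ≤ M) (hθ : ∀ j, θ.col j ∈ Low (Fin M)) (h1 : 1 ≤ θ.rank)
    (h2 : 256 * θ.rank ≤ M) :
    2 * finrank (ZMod 2) (Inv δ (LinearMap.range θ.mulVecLin ⊔ E I)) < θ.rank := by
  by_contra hlt
  apply hδ
  have hr : θ.rank = finrank (ZMod 2) (Submodule.span (ZMod 2) (Set.range θ.col)) :=
    Matrix.rank_eq_finrank_span_cols θ
  obtain ⟨f, hf1, hf2, -⟩ := Submodule.exists_fun_fin_finrank_span_eq (ZMod 2) (Set.range θ.col)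
  rw [hr] at h1 h2 hlt
  refine ⟨_, h1, h2, ind I, ind_low hI, f, fun i => ?_, ?_⟩
  · obtain ⟨j, hj⟩ := hf1 i
    rw [← hj]; exact hθ j
  · rw [TT, supp_ind, hf2, ← Matrix.range_mulVecLin]
    rw [Matrix.range_mulVecLin] at hlt ⊢
    omega

lemma main_det {M : ℕ} {δ₁ δ₂ ψ : Mt M} (hM : 256 ≤ M) (h1 : δ₁ * δ₁ = 0) 
    (hb1 : ¬ Bad δ₁) (hb2 : ¬ Bad δ₂) (hl : ¬ Large δ₁ δ₂)
    (hw : 131072 ^ 2 * mwt ψ ≤ M ^ 2) (hψ : δ₁ * ψ + ψ * δ₂ᵀ = 0) :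
    ∃ φ : Mt M, ψ = δ₁ * φ + φ * δ₂ᵀ := by
  classical
  set I := heavy ψ with hI
  set J := heavy ψᵀ with hJ
  have cI : 131072 * I.card ≤ M := card_heavy ψ hw (by omega)
  have cJ : 131072 * J.card ≤ M := card_heavy ψᵀ (by rw [mwt_transpose]; exact hw) (by omega)
  have bI := inv_bot hb1 hM cI
  have bJ := inv_bot hb2 hM cJ
  by_cases hz : D I * ψ * D J = 0
  · exact boundary_of_zero bI bJ h1 hψ hz
  exfalso
  have hrk : 256 * ψ.rank ≤ M := by
    by_contra hlt
    apply hl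
    refine ⟨ψ, ?_, by omega, hψ⟩
    rw [mem_Low]
    have : hammingNorm (fun p : Fin M × Fin M => ψ p.1 p.2) = mwt ψ := by
      simp [hammingNorm, mwt]
    rw [this, Fintype.card_prod, Fintype.card_fin]
    nlinarith
  have hb := rank_bound (J := J) bI h1 hψ
  set θ := D I * ψ * D J with hθ
  have hθT : θᵀ = D J * ψᵀ * D I := by
    rw [hθ, Matrix.transpose_mul, Matrix.transpose_mul, D_transpose, D_transpose, mul_assoc]
  have r1 : θ.rank ≤ ψ.rank := (Matrix.rank_mul_le_left _ _).trans (Matrix.rank_mul_le_right _ _)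
  have r0 : 1 ≤ θ.rank := by
    rw [Nat.one_le_iff_ne_zero]
    intro h0
    apply hz
    rw [Matrix.rank, Submodule.finrank_eq_zero, LinearMap.range_eq_bot] at h0
    exact Matrix.ext_of_mulVec_single fun i => by
      have := LinearMap.congr_fun h0 (Pi.single i 1)
      rw [Matrix.mulVecLin_apply, LinearMap.zero_apply] at this
      rw [this, Matrix.zero_mulVec]
  have rT : θᵀ.rank = θ.rank := Matrix.rank_transpose θ
  have s1 := inv_small hb1 cI (θ := θ) (fun j => low_col ψ I j) r0 (by omega)
  have s2 := inv_small hb2 cJ (θ := θᵀ) (fun j => by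
    rw [hθT]; exact low_col ψᵀ J j) (by omega) (by omega)
  omega

/-- existence of a light nontrivial cycle -/
def Ev {M : ℕ} (c : ℝ) (δ₁ δ₂ : Mt M) : Prop :=
  ∃ ψ : Mt M, 0 < mwt ψ ∧ (mwt ψ : ℝ) < c * (M : ℝ) ^ 2 ∧ 
    (δ₁ * ψ + ψ * δ₂ᵀ = 0 ∧ ¬ ∃ φ : Mt M, ψ = δ₁ * φ + φ * δ₂ᵀ)

open Classical in
lemma count_Ev {M L : ℕ} {B : Finset (Mt M)} (hB : Good B L) (hL : M ≤ 4 * L) (hM : 256 ≤ M) :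
    (((B ×ˢ B).filter fun p => Ev (1 / 131072 ^ 2) p.1 p.2).card : ℝ) ≤ 
      3 * (M * (2 : ℝ) ^ (-(M : ℝ) / 32)) * (B.card : ℝ) ^ 2 := by
  have hsub : ((B ×ˢ B).filter fun p => Ev (1 / 131072 ^ 2) p.1 p.2) ⊆
      ((B.filter fun δ => Bad δ) ×ˢ B ∪ B ×ˢ (B.filter fun δ => Bad δ)) ∪ 
        B.biUnion fun δ₁ => {δ₁} ×ˢ (B.filter fun δ => Large δ₁ δ) := by
    rintro ⟨δ₁, δ₂⟩ h
    simp only [mem_filter, mem_product] at h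
    obtain ⟨⟨m1, m2⟩, ψ, -, hw, hc, hn⟩ := h
    simp only [mem_union, mem_product, mem_filter, mem_biUnion, mem_singleton]
    by_contra hcon
    push Not at hcon
    obtain ⟨⟨c1, c2⟩, c3⟩ := hcon
    apply hn
    refine main_det hM (hB.sq _ m1) (fun h => c1 ⟨m1, h⟩ m2) (fun h => c2 m1 m2 h)
      (fun h => c3 δ₁ m1 rfl m2 h) ?_ hc
    have : (131072 : ℝ) ^ 2 * mwt ψ ≤ (M : ℝ) ^ 2 := by
      have := hw.le
      rw [one_div, inv_mul_eq_div, le_div_iff₀ (by positivity)] at this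
      linarith
    exact_mod_cast this
  have b1 := count_Bad hB hL
  set η := (M * (2 : ℝ) ^ (-(M : ℝ) / 32)) with hη
  set b := (B.card : ℝ) with hb
  have hb0 : 0 ≤ b := by positivity
  have b2 : ∀ δ₁ ∈ B, (({δ₁} ×ˢ (B.filter fun δ => Large δ₁ δ)).card : ℝ) ≤ η * b := by
    intro δ₁ _
    rw [Finset.card_product, Finset.card_singleton, one_mul]
    refine (count_Large1 hB hL δ₁).trans ?_
    apply mul_le_mul_of_nonneg_right _ hb0
    have hM' : (256 : ℝ) ≤ M := by exact_mod_cast hM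
    calc (2 : ℝ) ^ (-(M : ℝ) ^ 2 / 4096) ≤ (2 : ℝ) ^ (-(M : ℝ) / 32) := by
          apply Real.rpow_le_rpow_of_exponent_le (by norm_num)
          nlinarith
      _ ≤ η := by
          rw [hη]
          apply le_mul_of_one_le_left (by positivity)
          linarith
  have b3 : ((B.biUnion fun δ₁ => {δ₁} ×ˢ (B.filter fun δ => Large δ₁ δ)).card : ℝ) ≤ b * (η * b) := by
    rw [hb, ← nsmul_eq_mul]
    refine le_trans ?_ (Finset.sum_le_card_nsmul _ _ _ b2)
    exact_mod_cast Finset.card_biUnion_le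
  have b4 : (((B ×ˢ B).filter fun p => Ev (1 / 131072 ^ 2) p.1 p.2).card : ℝ) ≤ 
      ((B.filter fun δ => Bad δ).card * b + b * (B.filter fun δ => Bad δ).card) + 
      ((B.biUnion fun δ₁ => {δ₁} ×ˢ (B.filter fun δ => Large δ₁ δ)).card : ℝ) := by
    rw [hb]
    have := (Finset.card_le_card hsub).trans ((Finset.card_union_le _ _).trans 
      (Nat.add_le_add_right (Finset.card_union_le _ _) _))
    rw [Finset.card_product, Finset.card_product] at this
    exact_mod_cast this
  nlinarith

open Classical in
/-- the ensemble -/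
noncomputable def BB (M H : ℕ) : Finset (Mt M) := 
  univ.filter fun δ => δ * δ = 0 ∧ M - 2 * δ.rank = H

lemma good_BB {M H : ℕ} (hH : 1 ≤ H) : Good (BB M H) ((M - H) / 2) := by
  constructor
  · intro δ hδ
    simp only [BB, mem_filter] at hδ
    exact hδ.2.1
  · intro δ hδ
    simp only [BB, mem_filter] at hδ
    omega
  · intro δ hδ g gi h1 h2
    simp only [BB, mem_filter, mem_univ, true_and] at hδ ⊢
    constructor
    · have : g * δ * gi * (g * δ * gi) = g * δ * (gi * g) * δ * gi := by noncomm_ring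
      rw [this, h2, mul_one, mul_assoc g, hδ.1]; simp
    · have hg : IsUnit g := ⟨⟨g, gi, h1, h2⟩, rfl⟩
      have hgi : IsUnit gi := ⟨⟨gi, g, h2, h1⟩, rfl⟩
      rw [Matrix.rank_mul_eq_left_of_isUnit_det _ _ ((Matrix.isUnit_iff_isUnit_det _).1 hgi),
        Matrix.rank_mul_eq_right_of_isUnit_det _ _ ((Matrix.isUnit_iff_isUnit_det _).1 hg)]
      exact hδ.2

lemma transpose_BB {M H : ℕ} {δ : Mt M} (h : δ ∈ BB M H) : δᵀ ∈ BB M H := by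
  simp only [BB, mem_filter, mem_univ, true_and] at h ⊢
  rw [← Matrix.transpose_mul, h.1, Matrix.rank_transpose]
  exact ⟨Matrix.transpose_zero, h.2⟩

lemma tends : Filter.Tendsto (fun M : ℕ => 6 * ((M : ℝ) * (2 : ℝ) ^ (-(M : ℝ) / 32))) 
    Filter.atTop (nhds 0) := by
  have h := tendsto_self_mul_const_pow_of_lt_one (r := (2 : ℝ) ^ (-(1 : ℝ) / 32)) (by positivity)
    (Real.rpow_lt_one_of_one_lt_of_neg (by norm_num) (by norm_num))
  have h2 := h.const_mul 6
  rw [mul_zero] at h2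
  refine h2.congr fun M => ?_
  rw [← Real.rpow_natCast, ← Real.rpow_mul (by norm_num)]
  congr 3
  ring

end HP
end HP4

/-- For sufficiently small `c` and encoding rate `ρ`, the probability that the
homological product of two uniformly random boundary operators with homological
dimension `H ≤ ρM` has distance less than `cM²` is `o(1)`: the number of pairs
`(δ₁, δ₂)` from the ensemble `B` admitting a nontrivial cycle or cocycle of weight less
than `cM²` is at most `ε·|B|²`, for all `M` large enough (depending on `ε`). -/
theorem random_product_code_linear_distance :
    ∃ c : ℝ, 0 < c ∧ ∃ ρ : ℝ, 0 < ρ ∧ ∀ ε : ℝ, 0 < ε → ∃ M₀ : ℕ,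
      ∀ M : ℕ, M₀ ≤ M → ∀ H : ℕ, 1 ≤ H → (H : ℝ) ≤ ρ * M →
        (Nat.card {p : Matrix (Fin M) (Fin M) (ZMod 2) ×
            Matrix (Fin M) (Fin M) (ZMod 2) //
            (p.1 * p.1 = 0 ∧ M - 2 * p.1.rank = H) ∧
            (p.2 * p.2 = 0 ∧ M - 2 * p.2.rank = H) ∧
            ∃ ψ : Matrix (Fin M) (Fin M) (ZMod 2),
              0 < mwt ψ ∧ (mwt ψ : ℝ) < c * (M : ℝ) ^ 2 ∧
              ((p.1 * ψ + ψ * p.2ᵀ = 0 ∧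
                ¬ ∃ φ : Matrix (Fin M) (Fin M) (ZMod 2), ψ = p.1 * φ + φ * p.2ᵀ) ∨
               (p.1ᵀ * ψ + ψ * p.2 = 0 ∧
                ¬ ∃ φ : Matrix (Fin M) (Fin M) (ZMod 2), ψ = p.1ᵀ * φ + φ * p.2))} : ℝ) ≤
          ε * (Nat.card {δ : Matrix (Fin M) (Fin M) (ZMod 2) //
            δ * δ = 0 ∧ M - 2 * δ.rank = H} : ℝ) ^ 2 := by
  classical
  refine ⟨1 / 131072 ^ 2, by norm_num, 1 / 4, by norm_num, fun ε hε => ?_⟩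
  obtain ⟨M₁, hM₁⟩ := Filter.eventually_atTop.1 (HP.tends.eventually (gt_mem_nhds hε))
  refine ⟨max M₁ 256, fun M hM H hH hHM => ?_⟩
  have hM1 := hM₁ M (le_trans (le_max_left _ _) hM)
  have hM2 : 256 ≤ M := le_trans (le_max_right _ _) hM
  have hH4 : 4 * H ≤ M := by
    have : (4 : ℝ) * H ≤ M := by linarith
    exact_mod_cast this
  have hB := HP.good_BB (M := M) hH
  have key := HP.count_Ev hB (by omega) hM2
  have hcard : Nat.card {δ : Matrix (Fin M) (Fin M) (ZMod 2) //
            δ * δ = 0 ∧ M - 2 * δ.rank = H} = (HP.BB M H).card := by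
    rw [Nat.card_eq_fintype_card, Fintype.card_subtype, HP.BB]
  rw [hcard]
  set B := HP.BB M H with hBdef
  set S := (B ×ˢ B).filter fun p => HP.Ev (1 / 131072 ^ 2) p.1 p.2 with hS
  have hle : Nat.card {p : Matrix (Fin M) (Fin M) (ZMod 2) ×
            Matrix (Fin M) (Fin M) (ZMod 2) //
            (p.1 * p.1 = 0 ∧ M - 2 * p.1.rank = H) ∧
            (p.2 * p.2 = 0 ∧ M - 2 * p.2.rank = H) ∧
            ∃ ψ : Matrix (Fin M) (Fin M) (ZMod 2),
              0 < mwt ψ ∧ (mwt ψ : ℝ) < 1 / 131072 ^ 2 * (M : ℝ) ^ 2 ∧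
              ((p.1 * ψ + ψ * p.2ᵀ = 0 ∧
                ¬ ∃ φ : Matrix (Fin M) (Fin M) (ZMod 2), ψ = p.1 * φ + φ * p.2ᵀ) ∨
               (p.1ᵀ * ψ + ψ * p.2 = 0 ∧
                ¬ ∃ φ : Matrix (Fin M) (Fin M) (ZMod 2), ψ = p.1ᵀ * φ + φ * p.2))} ≤ 
      S.card + S.card := by
    rw [Nat.card_eq_fintype_card, Fintype.card_subtype]
    refine le_trans (Finset.card_le_card (t := S ∪ S.image fun p => (p.1ᵀ, p.2ᵀ)) ?_) 
      ((Finset.card_union_le _ _).trans (Nat.add_le_add_left Finset.card_image_le _))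
    rintro ⟨δ₁, δ₂⟩ hp
    simp only [Finset.mem_filter, Finset.mem_univ, true_and] at hp
    obtain ⟨h1, h2, ψ, w1, w2, h | h⟩ := hp
    · apply Finset.mem_union_left
      simp only [hS, Finset.mem_filter, Finset.mem_product]
      refine ⟨⟨?_, ?_⟩, ψ, w1, w2, h⟩
      · simpa [hBdef, HP.BB] using h1
      · simpa [hBdef, HP.BB] using h2
    · apply Finset.mem_union_right
      rw [Finset.mem_image]
      refine ⟨(δ₁ᵀ, δ₂ᵀ), ?_, by simp⟩
      simp only [hS, Finset.mem_filter, Finset.mem_product]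
      refine ⟨⟨HP.transpose_BB ?_, HP.transpose_BB ?_⟩, ψ, w1, w2, ?_⟩
      · simpa [hBdef, HP.BB] using h1
      · simpa [hBdef, HP.BB] using h2
      · rw [Matrix.transpose_transpose]; exact h
  have hle' := (Nat.cast_le (α := ℝ)).2 hle
  push_cast at hle'
  push_cast
  refine hle'.trans ?_
  have hb : 0 ≤ (B.card : ℝ) ^ 2 := by positivity
  nlinarith
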